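/- Let ω ∈ ℝ^ℤ be non-resonant and let H₀ = D_ω + P₀ with P₀ ∈ 𝓕^{≥1} be formally linearizable. Define inductively S_i ∈ 𝓡 as the solution of {D_ω, S_i} = Π^𝓡 H_i with Π^𝓚 S_i = 0, and H_{i+1} := e^{{S_i,·}} H_i. Then for every i ≥ 0 one has H_i = D_ω + P_i with P_i ∈ 𝓕^{≥ 2^i}; in particular the scaling order of the perturbation doubles at each step. -/

import Mathlib

open scoped BigOperators ENNReal

/-- The index set `ℕ^ℤ_f`: finitely supported functions `ℤ → ℕ`. -/
abbrev Idx : Type := ℤ →₀ ℕ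

/-- Coefficient families of formal Hamiltonians. -/
abbrev Coeffs : Type := Idx → Idx → ℂ

/-- `|α| = ∑_j α_j`. -/
def wt (α : Idx) : ℕ := α.sum fun _ n => n

/-- The momentum `π(α,β) = ∑_j j (α_j - β_j)`. -/
def mom (α β : Idx) : ℤ := (α.sum fun j n => j * (n : ℤ)) - (β.sum fun j n => j * (n : ℤ))

/-- Membership in the space `𝓕` of formal Hamiltonians: vanishing of the
constant and linear coefficients, reality and momentum conservation. -/
def InF (H : Coeffs) : Prop :=
  H 0 0 = 0 ∧ H (Finsupp.single 0 1) 0 = 0 ∧ H 0 (Finsupp.single 0 1) = 0 ∧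
    (∀ α β, H α β = (starRingEnd ℂ) (H β α)) ∧ (∀ α β, mom α β ≠ 0 → H α β = 0)

/-- Membership in `𝓕^{≥d}`: supported on pairs with `|α|+|β| ≥ d+2`. -/
def InFge (d : ℕ) (H : Coeffs) : Prop :=
  InF H ∧ ∀ α β, wt α + wt β < d + 2 → H α β = 0

/-- Membership in `𝓚`: supported on the diagonal `{α = β}`. -/
def InK (H : Coeffs) : Prop := InF H ∧ ∀ α β, α ≠ β → H α β = 0

/-- Membership in `𝓡`: supported off the diagonal. -/
def InR (H : Coeffs) : Prop := InF H ∧ ∀ α, H α α = 0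

/-- The projection `Π^𝓚` onto the diagonal part. -/
def PiK (H : Coeffs) : Coeffs := fun α β => if α = β then H α β else 0

/-- The projection `Π^𝓡` onto the off-diagonal part. -/
def PiR (H : Coeffs) : Coeffs := fun α β => if α = β then 0 else H α β

/-- A single term of the Poisson-bracket double sum `{F,G}_{α,β}`, indexed by
`x = (j, ((α¹,β¹), (α²,β²)))`: it is
`F_{α¹,β¹} G_{α²,β²} (α¹_j β²_j − β¹_j α²_j)` when `π(α¹,β¹) = π(α²,β²) = 0`,
`α = α¹+α²−e_j` and `β = β¹+β²−e_j`, and `0` otherwise. -/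
noncomputable def bracketTerm (F G : Coeffs) (α β : Idx)
    (x : ℤ × (Idx × Idx) × (Idx × Idx)) : ℂ :=
  if mom x.2.1.1 x.2.1.2 = 0 ∧ mom x.2.2.1 x.2.2.2 = 0 ∧
      α = x.2.1.1 + x.2.2.1 - Finsupp.single x.1 1 ∧
      β = x.2.1.2 + x.2.2.2 - Finsupp.single x.1 1 then
    F x.2.1.1 x.2.1.2 * G x.2.2.1 x.2.2.2 *
      ((x.2.1.1 x.1 : ℂ) * (x.2.2.2 x.1 : ℂ) - (x.2.1.2 x.1 : ℂ) * (x.2.2.1 x.1 : ℂ))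
  else 0

/-- The Poisson bracket `{F,G}`, defined coefficientwise by
`{F,G}_{α,β} = i ∑_x bracketTerm F G α β x` (a sum with finitely many
nonzero terms, so the `finsum` gives the intended value). -/
noncomputable def bracket (F G : Coeffs) : Coeffs := fun α β =>
  Complex.I * ∑ᶠ x : ℤ × (Idx × Idx) × (Idx × Idx), bracketTerm F G α β x

/-- Iterates `ad_G^k`. -/
noncomputable def adPow (G : Coeffs) : ℕ → Coeffs → Coeffs
  | 0, H => H
  | k + 1, H => bracket G (adPow G k H)

/-- The formal symplectic change of variables `e^{{G,·}} = ∑_{k≥0} ad_G^k / k!`;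
for `G ∈ 𝓕^{≥1}` each coefficient receives only finitely many nonzero
contributions, so the `finsum` gives the intended value. -/
noncomputable def expAd (G H : Coeffs) : Coeffs := fun α β =>
  ∑ᶠ k : ℕ, ((k.factorial : ℂ))⁻¹ * adPow G k H α β

/-- The quadratic Hamiltonian `D_ω = ∑_j ω_j |u_j|²`, whose only nonzero
coefficients are `(D_ω)_{e_j,e_j} = ω_j`. -/
noncomputable def Dom (ω : ℤ → ℝ) : Coeffs := fun α β =>
  ∑ᶠ j : ℤ, if α = Finsupp.single j 1 ∧ β = Finsupp.single j 1 then (ω j : ℂ) else 0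

/-- Non-resonance: every non-trivial finite integer combination of `ω` is nonzero. -/
def NonResonant (ω : ℤ → ℝ) : Prop :=
  ∀ ℓ : ℤ →₀ ℤ, ℓ ≠ 0 → (ℓ.sum fun j c => ω j * (c : ℝ)) ≠ 0

/-! ### An auxiliary bracket acting on arbitrary formal series -/

/-- The first moment. -/
def mo (α : Idx) : ℤ := α.sum fun j n => j * (n : ℤ)

lemma mo_add (α β : Idx) : mo (α + β) = mo α + mo β := by
  unfold mo
  exact Finsupp.sum_add_index' (by simp) (by intros; push_cast; ring)

lemma mo_single (j : ℤ) : mo (Finsupp.single j 1) = j := by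
  unfold mo; simp

lemma mom_eq (α β : Idx) : mom α β = mo α - mo β := rfl

lemma wt_add (α β : Idx) : wt (α + β) = wt α + wt β := by
  unfold wt
  exact Finsupp.sum_add_index' (by simp) (by intros; rfl)

lemma wt_single (j : ℤ) : wt (Finsupp.single j 1) = 1 := by
  unfold wt; simp

/-- The symplectic coefficient. -/
def cc (j : ℤ) (a b : Idx × Idx) : ℂ :=
  (a.1 j : ℂ) * (b.2 j : ℂ) - (a.2 j : ℂ) * (b.1 j : ℂ)

lemma cc_ne {j : ℤ} {a b : Idx × Idx} (h : cc j a b ≠ 0) :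
    (1 ≤ a.1 j ∧ 1 ≤ b.2 j) ∨ (1 ≤ a.2 j ∧ 1 ≤ b.1 j) := by
  by_contra hc
  apply h
  unfold cc
  have h1 : a.1 j = 0 ∨ b.2 j = 0 := by omega
  have h2 : a.2 j = 0 ∨ b.1 j = 0 := by omega
  rcases h1 with h1 | h1 <;> rcases h2 with h2 | h2 <;> simp [h1, h2]

lemma sub_single_add {a : Idx} {j : ℤ} (h : 1 ≤ a j) :
    a - Finsupp.single j 1 + Finsupp.single j 1 = a :=
  tsub_add_cancel_of_le (by simpa [Finsupp.single_le_iff] using h)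

lemma cc_eq {j : ℤ} {a b : Idx × Idx} {α β : Idx} (h : cc j a b ≠ 0)
    (hα : α = a.1 + b.1 - Finsupp.single j 1) (hβ : β = a.2 + b.2 - Finsupp.single j 1) :
    α + Finsupp.single j 1 = a.1 + b.1 ∧ β + Finsupp.single j 1 = a.2 + b.2 := by
  subst hα hβ
  constructor <;> apply sub_single_add <;> rcases cc_ne h with h | h <;>
    simp only [Finsupp.add_apply] <;> omega

/-- One term of the auxiliary bracket. -/
noncomputable def brTerm (F f : Coeffs) (α β : Idx)
    (x : ℤ × (Idx × Idx) × (Idx × Idx)) : ℂ :=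
  if mom x.2.1.1 x.2.1.2 = 0 ∧
      α = x.2.1.1 + x.2.2.1 - Finsupp.single x.1 1 ∧
      β = x.2.1.2 + x.2.2.2 - Finsupp.single x.1 1 then
    F x.2.1.1 x.2.1.2 * f x.2.2.1 x.2.2.2 * cc x.1 x.2.1 x.2.2
  else 0

/-- The relevant index set. -/
def supp (α β : Idx) : Set (ℤ × (Idx × Idx) × (Idx × Idx)) :=
  {x | mom x.2.1.1 x.2.1.2 = 0 ∧
      α = x.2.1.1 + x.2.2.1 - Finsupp.single x.1 1 ∧
      β = x.2.1.2 + x.2.2.2 - Finsupp.single x.1 1 ∧ cc x.1 x.2.1 x.2.2 ≠ 0}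

lemma supp_finite (α β : Idx) : (supp α β).Finite := by
  let J : Set ℤ := ((fun p : Idx × Idx => mo p.2 - mo p.1) '' (Set.Icc 0 α ×ˢ Set.Icc 0 β)) ∪
    ((fun p : Idx × Idx => mo p.1 - mo p.2) '' (Set.Icc 0 α ×ˢ Set.Icc 0 β))
  have hf : (Set.Icc 0 α ×ˢ Set.Icc 0 β : Set (Idx × Idx)).Finite :=
    (Set.finite_Icc _ _).prod (Set.finite_Icc _ _)
  have hJ : J.Finite := (hf.image _).union (hf.image _)
  let U : ℤ → Set (ℤ × (Idx × Idx) × (Idx × Idx)) := fun j =>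
    {j} ×ˢ ((Set.Icc 0 (α + Finsupp.single j 1) ×ˢ Set.Icc 0 (β + Finsupp.single j 1)) ×ˢ
      (Set.Icc 0 (α + Finsupp.single j 1) ×ˢ Set.Icc 0 (β + Finsupp.single j 1)))
  have hU : (⋃ j ∈ J, U j).Finite := hJ.biUnion fun j _ =>
    (Set.finite_singleton _).prod
      (((Set.finite_Icc _ _).prod (Set.finite_Icc _ _)).prod
        ((Set.finite_Icc _ _).prod (Set.finite_Icc _ _)))
  refine hU.subset ?_
  rintro ⟨j, ⟨a1, a2⟩, ⟨b1, b2⟩⟩ ⟨hm, hα, hβ, hc⟩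
  obtain ⟨e1, e2⟩ := cc_eq hc hα hβ
  have hcn := cc_ne hc
  simp only at e1 e2 hm hcn
  rw [mom_eq] at hm
  have hj : j ∈ J := by
    rcases hcn with ⟨h1, h2⟩ | ⟨h1, h2⟩
    · left
      have k1 := sub_single_add h1
      have k2 := sub_single_add h2
      refine ⟨(a1 - Finsupp.single j 1, a2), ⟨⟨zero_le, ?_⟩, ⟨zero_le, ?_⟩⟩, ?_⟩
      · rw [← k1] at e1
        have : α = a1 - Finsupp.single j 1 + b1 := by
          apply add_right_cancel (b := Finsupp.single j 1); rw [e1, add_right_comm]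
        rw [this]; exact le_self_add
      · rw [← k2] at e2
        have : β = a2 + (b2 - Finsupp.single j 1) := by
          apply add_right_cancel (b := Finsupp.single j 1); rw [e2, add_assoc]
        rw [this]; exact le_self_add
      · have := mo_add (a1 - Finsupp.single j 1) (Finsupp.single j 1)
        rw [k1, mo_single] at this
        simp only
        linarith
    · right
      have k1 := sub_single_add h1
      have k2 := sub_single_add h2
      refine ⟨(a1, a2 - Finsupp.single j 1), ⟨⟨zero_le, ?_⟩, ⟨zero_le, ?_⟩⟩, ?_⟩
      · rw [← k2] at e1
        have : α = a1 + (b1 - Finsupp.single j 1) := by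
          apply add_right_cancel (b := Finsupp.single j 1); rw [e1, add_assoc]
        rw [this]; exact le_self_add
      · rw [← k1] at e2
        have : β = a2 - Finsupp.single j 1 + b2 := by
          apply add_right_cancel (b := Finsupp.single j 1); rw [e2, add_right_comm]
        rw [this]; exact le_self_add
      · have := mo_add (a2 - Finsupp.single j 1) (Finsupp.single j 1)
        rw [k1, mo_single] at this
        simp only
        linarith
  simp only [Set.mem_iUnion]
  refine ⟨j, hj, rfl, ⟨⟨zero_le, ?_⟩, ⟨zero_le, ?_⟩⟩, ⟨⟨zero_le, ?_⟩, ⟨zero_le, ?_⟩⟩⟩ <;>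
    simp only [e1, e2]
  · exact le_self_add
  · exact le_self_add
  · exact le_add_self
  · exact le_add_self

/-- The auxiliary bracket as a finite sum. -/
noncomputable def br0 (F f : Coeffs) : Coeffs := fun α β =>
  Complex.I * ∑ x ∈ (supp_finite α β).toFinset,
    F x.2.1.1 x.2.1.2 * f x.2.2.1 x.2.2.2 * cc x.1 x.2.1 x.2.2

/-- The auxiliary bracket as a bilinear map. -/
noncomputable def br : Coeffs →ₗ[ℂ] Coeffs →ₗ[ℂ] Coeffs :=
  LinearMap.mk₂ ℂ br0
    (by intros; ext α β; simp only [br0, Pi.add_apply, ← mul_add, ← Finset.sum_add_distrib]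
        congr 1; apply Finset.sum_congr rfl; intros; ring)
    (by intros; ext α β; simp only [br0, Pi.smul_apply, smul_eq_mul, Finset.mul_sum]
        apply Finset.sum_congr rfl; intros; ring)
    (by intros; ext α β; simp only [br0, Pi.add_apply, ← mul_add, ← Finset.sum_add_distrib]
        congr 1; apply Finset.sum_congr rfl; intros; ring)
    (by intros; ext α β; simp only [br0, Pi.smul_apply, smul_eq_mul, Finset.mul_sum]
        apply Finset.sum_congr rfl; intros; ring)

lemma br_apply (F f : Coeffs) (α β : Idx) : br F f α β =
  Complex.I * ∑ x ∈ (supp_finite α β).toFinset,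
    F x.2.1.1 x.2.1.2 * f x.2.2.1 x.2.2.2 * cc x.1 x.2.1 x.2.2 := rfl

lemma continuous_br_right (F : Coeffs) : Continuous (fun f => br F f) := by
  refine continuous_pi fun α => continuous_pi fun β => ?_
  simp only [br_apply]
  fun_prop

lemma continuous_br_left (f : Coeffs) : Continuous (fun F => br F f) := by
  refine continuous_pi fun α => continuous_pi fun β => ?_
  simp only [br_apply]
  fun_prop

lemma br_finsum (F f : Coeffs) (α β : Idx) :
    br F f α β = Complex.I * ∑ᶠ x, brTerm F f α β x := by
  rw [br_apply, finsum_eq_sum_of_support_subset (s := (supp_finite α β).toFinset)]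
  · congr 1
    apply Finset.sum_congr rfl
    intro x hx
    rw [Set.Finite.mem_toFinset] at hx
    rw [brTerm, if_pos ⟨hx.1, hx.2.1, hx.2.2.1⟩]
  · intro x hx
    rw [Set.Finite.coe_toFinset]
    rw [Function.mem_support, brTerm] at hx
    split_ifs at hx with h
    · exact ⟨h.1, h.2.1, h.2.2, fun h0 => hx (by rw [h0, mul_zero])⟩
    · exact absurd rfl hx

/-- Vanishing of the coefficients of nonzero momentum. -/
def M0 (F : Coeffs) : Prop := ∀ α β, mom α β ≠ 0 → F α β = 0

lemma bracket_eq_br (F : Coeffs) {G : Coeffs} (hG : M0 G) : bracket F G = br F G := by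
  ext α β
  rw [br_finsum, bracket]
  congr 1
  apply finsum_congr
  intro x
  unfold bracketTerm brTerm
  by_cases h : mom x.2.2.1 x.2.2.2 = 0
  · simp [h, cc]
  · simp [h, hG _ _ h]

/-- If all summands vanish, so does the coefficient of the bracket. -/
lemma br_eq_zero (F f : Coeffs) (α β : Idx)
    (h : ∀ j (a b : Idx × Idx), mom a.1 a.2 = 0 → α + Finsupp.single j 1 = a.1 + b.1 →
      β + Finsupp.single j 1 = a.2 + b.2 → F a.1 a.2 * f b.1 b.2 = 0) : br F f α β = 0 := by
  rw [br_apply, Finset.sum_eq_zero, mul_zero]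
  intro x hx
  rw [Set.Finite.mem_toFinset] at hx
  obtain ⟨h1, h2, h3, h4⟩ := hx
  obtain ⟨e1, e2⟩ := cc_eq h4 h2 h3
  rw [h x.1 x.2.1 x.2.2 h1 e1 e2, zero_mul]

lemma M0_br (F : Coeffs) {G : Coeffs} (hG : M0 G) : M0 (br F G) := by
  intro α β hm
  apply br_eq_zero
  intro j a b h1 h2 h3
  rw [hG b.1 b.2, mul_zero]
  intro h4
  apply hm
  have := congrArg mo h2
  have h5 := congrArg mo h3
  rw [mo_add, mo_add, mo_single] at this h5
  rw [mom_eq] at *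
  linarith

/-- Vanishing of the coefficients of degree below `n`. -/
def V (n : ℕ) (F : Coeffs) : Prop := ∀ α β, wt α + wt β < n → F α β = 0

lemma V_br {p q n : ℕ} {F f : Coeffs} (hF : V p F) (hf : V q f) (hn : n + 2 ≤ p + q) :
    V n (br F f) := by
  intro α β hm
  apply br_eq_zero
  intro j a b h1 h2 h3
  have := congrArg wt h2
  have h5 := congrArg wt h3
  rw [wt_add, wt_add, wt_single] at this h5
  by_cases h : wt a.1 + wt a.2 < p
  · rw [hF _ _ h, zero_mul]
  · rw [hf _ _ (by omega), mul_zero]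

lemma V.mono {m n : ℕ} {F : Coeffs} (h : V n F) (hmn : m ≤ n) : V m F :=
  fun α β hh => h α β (by omega)

lemma V.add {n : ℕ} {F G : Coeffs} (h : V n F) (h' : V n G) : V n (F + G) :=
  fun α β hh => by simp [h α β hh, h' α β hh]

lemma V.sub {n : ℕ} {F G : Coeffs} (h : V n F) (h' : V n G) : V n (F - G) :=
  fun α β hh => by simp [h α β hh, h' α β hh]

lemma V.smul {n : ℕ} {F : Coeffs} (c : ℂ) (h : V n F) : V n (c • F) :=
  fun α β hh => by simp [h α β hh]

lemma V_zero (F : Coeffs) : V 0 F := fun α β h => by omega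

/-! ### Jacobi identity -/

/-- Basis monomials. -/
noncomputable def dl (a : Idx × Idx) : Coeffs := fun α β => if (α, β) = a then 1 else 0

lemma eq_zero_of_dl (L₀ : Coeffs → Coeffs) (hadd : ∀ x y, L₀ (x + y) = L₀ x + L₀ y)
    (hsm : ∀ (c : ℂ) x, L₀ (c • x) = c • L₀ x) (hL₀ : Continuous L₀) (h₀ : ∀ a, L₀ (dl a) = 0)
    (F : Coeffs) : L₀ F = 0 := by
  let L : Coeffs →ₗ[ℂ] Coeffs := { toFun := L₀, map_add' := hadd, map_smul' := hsm }
  have hL : Continuous L := hL₀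
  have h : ∀ a, L (dl a) = 0 := h₀
  change L F = 0
  have hs : HasSum (fun a : Idx × Idx => F a.1 a.2 • dl a) F := by
    rw [Pi.hasSum]; intro α
    rw [Pi.hasSum]; intro β
    have := hasSum_single (f := fun a : Idx × Idx => (F a.1 a.2 • dl a) α β) (α, β) (by
      intro b hb
      simp [dl, hb.symm])
    simpa [dl] using this
  have h2 := hs.map L hL
  have h3 : (L ∘ fun a : Idx × Idx => F a.1 a.2 • dl a) = fun _ => 0 := by
    ext1 a; simp [h]
  rw [h3] at h2
  exact h2.unique hasSum_zero

/-- The diagonal pair. -/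
noncomputable def eps (j : ℤ) : Idx × Idx := (Finsupp.single j 1, Finsupp.single j 1)

lemma br_dl_of_ne {a : Idx × Idx} (h : mom a.1 a.2 ≠ 0) (f : Coeffs) : br (dl a) f = 0 := by
  ext α β
  apply br_eq_zero
  intro j a' b h1 _ _
  have : ¬ ((a'.1, a'.2) = a) := by rintro rfl; exact h h1
  simp [dl, this]

lemma br_dl_dl {a b : Idx × Idx} (ha : mom a.1 a.2 = 0) (T : Finset ℤ)
    (hT : ∀ j, j ∉ T → a.1 j = 0 ∧ a.2 j = 0) :
    br (dl a) (dl b) = Complex.I • ∑ j ∈ T, cc j a b • dl (a + b - eps j) := by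
  ext α β
  rw [br_finsum]
  simp only [Pi.smul_apply, Finset.sum_apply, smul_eq_mul]
  congr 1
  have hinj : Function.Injective (fun j : ℤ => (j, a, b)) := by
    intro x y h; simpa using h
  rw [finsum_eq_sum_of_support_subset (s := T.map ⟨_, hinj⟩)]
  · rw [Finset.sum_map]
    apply Finset.sum_congr rfl
    intro j _
    simp only [brTerm, dl, Function.Embedding.coeFn_mk, ha, true_and, if_true]
    have : (α = a.1 + b.1 - Finsupp.single j 1 ∧ β = a.2 + b.2 - Finsupp.single j 1) ↔
        (α, β) = a + b - eps j := by
      rw [Prod.ext_iff]; rfl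
    by_cases hh : (α, β) = a + b - eps j
    · simp [this, hh]
    · simp [this, hh]
  · rintro ⟨j, a', b'⟩ hx
    rw [Function.mem_support, brTerm] at hx
    split_ifs at hx with h
    · simp only [dl, Prod.mk.eta] at hx
      have h1 : a' = a := by by_contra hh; simp [hh] at hx
      have h2 : b' = b := by by_contra hh; simp [hh] at hx
      subst h1 h2
      simp only [Finset.coe_map, Set.mem_image, Function.Embedding.coeFn_mk]
      refine ⟨j, ?_, rfl⟩
      by_contra hj
      have := hT j hj
      simp [cc, this.1, this.2] at hx
    · exact absurd rfl hx

lemma cc_add_right (j : ℤ) (a b d : Idx × Idx) : cc j a (b + d) = cc j a b + cc j a d := by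
  simp [cc]; ring

lemma cc_swap (j : ℤ) (a b : Idx × Idx) : cc j b a = - cc j a b := by
  simp [cc]; ring

/-- Indicator of the exponent equation. -/
noncomputable def XX (m s : Idx × Idx) (j k : ℤ) : ℂ := if m + eps j + eps k = s then 1 else 0

lemma step_right (m a b d : Idx × Idx) (j k : ℤ) :
    cc j b d * (cc k a (b + d - eps j) * dl (a + (b + d - eps j) - eps k) m.1 m.2) =
    cc j b d * ((cc k a b + cc k a d - if j = k then cc k a (eps k) else 0) *
      XX m (a + b + d) j k) := by
  by_cases h0 : cc j b d = 0
  · simp [h0]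
  congr 1
  have hs : b + d - eps j + eps j = b + d := by
    obtain ⟨e1, e2⟩ := cc_eq h0 rfl rfl
    exact Prod.ext e1 e2
  have hc : cc k a (b + d - eps j) = cc k a b + cc k a d - if j = k then cc k a (eps k) else 0 := by
    rw [← cc_add_right, ← hs, cc_add_right]
    rw [hs]
    by_cases hjk : j = k
    · subst hjk; simp
    · simp [hjk, cc, eps]
  rw [hc]
  by_cases h1 : cc k a (b + d - eps j) = 0
  · rw [← hc, h1]; simp
  congr 1
  have hs2 : a + (b + d - eps j) - eps k + eps k = a + (b + d - eps j) := by
    obtain ⟨e1, e2⟩ := cc_eq h1 rfl rfl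
    exact Prod.ext e1 e2
  unfold dl XX
  congr 1
  rw [eq_iff_iff]
  generalize b + d - eps j = y at *
  generalize a + y - eps k = z at *
  constructor
  · intro h
    have h : m = z := h
    rw [h, add_assoc a b d, ← hs, add_right_comm, hs2]; abel
  · intro h
    rw [add_assoc a b d, ← hs, ← add_assoc, ← hs2] at h
    have h2 : m + (eps j + eps k) = z + (eps j + eps k) := by rw [← add_assoc, h]; abel
    exact add_right_cancel h2

lemma mom_add_sub_eps {a b : Idx × Idx} {j : ℤ} (h : cc j a b ≠ 0) :
    mom (a + b - eps j).1 (a + b - eps j).2 = mom a.1 a.2 + mom b.1 b.2 := by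
  obtain ⟨e1, e2⟩ := cc_eq h rfl rfl
  have h1 := congrArg mo e1
  have h2 := congrArg mo e2
  rw [mo_add, mo_add, mo_single] at h1 h2
  simp only [mom_eq]
  change mo (a.1 + b.1 - Finsupp.single j 1) - mo (a.2 + b.2 - Finsupp.single j 1) = _
  linarith

lemma jacobi_dl (a b d : Idx × Idx) :
    br (dl a) (br (dl b) (dl d)) - br (dl b) (br (dl a) (dl d)) =
      br (br (dl a) (dl b)) (dl d) := by
  by_cases ha : mom a.1 a.2 = 0
  swap
  · simp [br_dl_of_ne ha]
  let T : Finset ℤ := a.1.support ∪ a.2.support ∪ b.1.support ∪ b.2.support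
    ∪ d.1.support ∪ d.2.support
  have hTa : ∀ j, j ∉ T → a.1 j = 0 ∧ a.2 j = 0 := by intro j hj; simp [T] at hj; tauto
  have hTb : ∀ j, j ∉ T → b.1 j = 0 ∧ b.2 j = 0 := by intro j hj; simp [T] at hj; tauto
  have hTd : ∀ j, j ∉ T → d.1 j = 0 ∧ d.2 j = 0 := by intro j hj; simp [T] at hj; tauto
  by_cases hb : mom b.1 b.2 = 0
  swap
  · rw [br_dl_of_ne hb, br_dl_of_ne hb, br_dl_dl ha T hTa]
    simp only [map_zero, sub_zero, map_smul, map_sum, LinearMap.smul_apply, LinearMap.sum_apply]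
    rw [Finset.sum_eq_zero, smul_zero]
    intro j _
    by_cases hc : cc j a b = 0
    · simp [hc]
    · rw [br_dl_of_ne, smul_zero]
      rw [mom_add_sub_eps hc, ha, zero_add]; exact hb
  have e1 : br (br (dl a) (dl b)) (dl d) = Complex.I • ∑ j ∈ T, cc j a b • Complex.I •
      ∑ k ∈ T, cc k (a + b - eps j) d • dl (a + b - eps j + d - eps k) := by
    rw [br_dl_dl ha T hTa]
    simp only [map_smul, map_sum, LinearMap.smul_apply, LinearMap.sum_apply]
    congr 1
    apply Finset.sum_congr rfl
    intro j hj
    by_cases hc : cc j a b = 0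
    · simp [hc]
    · rw [br_dl_dl (T := T)]
      · rw [mom_add_sub_eps hc, ha, hb, zero_add]
      · intro k hk
        have h1 := hTa k hk
        have h2 := hTb k hk
        simp [h1.1, h1.2, h2.1, h2.2]
  rw [e1, br_dl_dl hb T hTb, br_dl_dl ha T hTa]
  simp only [map_smul, map_sum]
  simp only [br_dl_dl ha T hTa, br_dl_dl hb T hTb]
  ext α β
  simp only [Pi.sub_apply, Pi.smul_apply, Finset.sum_apply, smul_eq_mul]
  set X : ℤ → ℤ → ℂ := fun j k => XX (α, β) (a + b + d) j k with hX
  have hXs : ∀ j k, X k j = X j k := by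
    intro j k
    simp only [hX, XX]
    rw [add_right_comm (α, β) (eps k) (eps j)]
  have s1 : ∀ j k, cc j b d * (cc k a (b + d - eps j) * dl (a + (b + d - eps j) - eps k) α β) =
      cc j b d * ((cc k a b + cc k a d - if j = k then cc k a (eps k) else 0) * X j k) :=
    fun j k => step_right (α, β) a b d j k
  have s2 : ∀ j k, cc j a d * (cc k b (a + d - eps j) * dl (b + (a + d - eps j) - eps k) α β) =
      cc j a d * ((cc k b a + cc k b d - if j = k then cc k b (eps k) else 0) * X j k) := by
    intro j k
    refine (step_right (α, β) b a d j k).trans ?_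
    rw [add_comm b a]
  have s3 : ∀ j k, cc j a b * (cc k (a + b - eps j) d * dl (a + b - eps j + d - eps k) α β) =
      cc j a b * (-(cc k d a + cc k d b - if j = k then cc k d (eps k) else 0) * X j k) := by
    intro j k
    have := step_right (α, β) d a b j k
    rw [cc_swap k (a + b - eps j) d, add_comm d (a + b - eps j)] at this
    have hd : d + a + b = a + b + d := by rw [add_assoc, add_comm]
    rw [hd] at this
    simp only [hX]
    linear_combination -this
  have sw : ∀ P Q R : ℂ, P * (Complex.I * (Q * R)) = Complex.I * (P * (Q * R)) := by intros; ring
  simp only [Finset.mul_sum, sw, s1, s2, s3]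
  rw [sub_eq_iff_eq_add, ← sub_eq_zero]
  have key : ∀ j k, cc j b d * ((cc k a b + cc k a d - if j = k then cc k a (eps k) else 0) * X j k)
      - (cc j a b * (-(cc k d a + cc k d b - if j = k then cc k d (eps k) else 0) * X j k) +
        cc j a d * ((cc k b a + cc k b d - if j = k then cc k b (eps k) else 0) * X j k)) =
      (cc j b d * cc k a b + cc j b d * cc k a d + cc j a d * cc k a b) * X j k -
      (cc k b d * cc j a b + cc k b d * cc j a d + cc k a d * cc j a b) * X j k := by
    intro j k
    rw [cc_swap k a d, cc_swap k b d, cc_swap k a b]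
    by_cases hjk : j = k
    · subst hjk
      simp only [if_true, cc, eps, Finsupp.single_eq_same, Nat.cast_one]
      ring
    · simp only [if_neg hjk]
      ring
  simp only [← Finset.sum_add_distrib, ← Finset.sum_sub_distrib, ← mul_add, ← mul_sub, key]
  simp only [← Finset.mul_sum]
  simp only [Finset.sum_sub_distrib]
  rw [Finset.sum_comm]
  simp only [hXs, sub_self, mul_zero]

lemma jacobi (F G f : Coeffs) : br F (br G f) - br G (br F f) = br (br F G) f := by
  have c1 : ∀ a b, ∀ f, br (dl a) (br (dl b) f) - br (dl b) (br (dl a) f) -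
      br (br (dl a) (dl b)) f = 0 := by
    intro a b
    refine eq_zero_of_dl _ ?_ ?_ ?_ ?_
    · intro x y; simp only [map_add]; abel
    · intro c x; simp only [map_smul, smul_sub]
    · exact (((continuous_br_right _).comp (continuous_br_right _)).sub
        ((continuous_br_right _).comp (continuous_br_right _))).sub (continuous_br_right _)
    · intro d; exact sub_eq_zero.2 (jacobi_dl a b d)
  have c2 : ∀ a G, br (dl a) (br G f) - br G (br (dl a) f) - br (br (dl a) G) f = 0 := by
    intro a
    refine eq_zero_of_dl _ ?_ ?_ ?_ ?_
    · intro x y; simp only [map_add, LinearMap.add_apply]; abel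
    · intro c x; simp only [map_smul, smul_sub, LinearMap.smul_apply]
    · exact ((((continuous_br_right (dl a)).comp (continuous_br_left f)).sub
        (continuous_br_left (br (dl a) f))).sub
          ((continuous_br_left f).comp (continuous_br_right (dl a))))
    · intro d; exact c1 a d f
  have c3 : ∀ F, br F (br G f) - br G (br F f) - br (br F G) f = 0 := by
    refine eq_zero_of_dl _ ?_ ?_ ?_ ?_
    · intro x y; simp only [map_add, LinearMap.add_apply]; abel
    · intro c x; simp only [map_smul, smul_sub, LinearMap.smul_apply]
    · exact (((continuous_br_left (br G f)).sub
        ((continuous_br_right G).comp (continuous_br_left f))).sub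
        ((continuous_br_left f).comp (continuous_br_left G)))
    · intro d; exact c2 d G
  exact sub_eq_zero.1 (c3 F)

/-! ### Exponentials -/

/-- Divided powers of the adjoint action. -/
noncomputable def dp (G : Coeffs) (k : ℕ) (f : Coeffs) : Coeffs :=
  ((k.factorial : ℂ))⁻¹ • ((br G) ^ k) f

/-- The exponential of the adjoint action. -/
noncomputable def ex (G f : Coeffs) : Coeffs := fun α β => ∑ᶠ k : ℕ, dp G k f α β

lemma dp_zero (G f : Coeffs) : dp G 0 f = f := by simp [dp]

lemma dp_succ (G : Coeffs) (k : ℕ) (f : Coeffs) :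
    br G (dp G k f) = ((k : ℂ) + 1) • dp G (k + 1) f := by
  simp only [dp, map_smul, pow_succ', Module.End.mul_apply, smul_smul, Nat.factorial_succ]
  congr 1
  have h1 : ((k : ℂ) + 1) ≠ 0 := by exact_mod_cast Nat.succ_ne_zero k
  have h2 : (k.factorial : ℂ) ≠ 0 := by exact_mod_cast k.factorial_ne_zero
  push_cast
  field_simp

lemma V_pow {G f : Coeffs} {p q : ℕ} (hG : V (p + 2) G) (hf : V q f) (k : ℕ) :
    V (k * p + q) (((br G) ^ k) f) := by
  induction k with
  | zero => simpa using hf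
  | succ k ih =>
    rw [pow_succ', Module.End.mul_apply]
    exact V_br hG ih (by rw [Nat.succ_mul]; omega)

lemma V_dp {G f : Coeffs} {q : ℕ} (hG : V 3 G) (hf : V q f) (k : ℕ) : V (k + q) (dp G k f) := by
  have := (V_pow (p := 1) hG hf k).smul ((k.factorial : ℂ))⁻¹
  rwa [mul_one] at this

lemma ex_eq {G f : Coeffs} {q : ℕ} (hG : V 3 G) (hf : V q f) {α β : Idx} {K : ℕ}
    (hK : wt α + wt β < K + q) : ex G f α β = ∑ k ∈ Finset.range K, dp G k f α β := by
  rw [ex, finsum_eq_sum_of_support_subset]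
  intro k hk
  rw [Function.mem_support] at hk
  simp only [Finset.coe_range, Set.mem_Iio]
  by_contra hh
  exact hk (V_dp hG hf k α β (by omega))

lemma V_ex_sub {G f : Coeffs} {q : ℕ} (hG : V 3 G) (hf : V q f) (K : ℕ) :
    V (K + q) (ex G f - ∑ k ∈ Finset.range K, dp G k f) := by
  intro α β h
  simp [ex_eq hG hf h, Finset.sum_apply]

lemma sum_square (a : ℕ → ℕ → ℂ) (K : ℕ) (h : ∀ k l, K ≤ k + l → a k l = 0) :
    ∑ k ∈ Finset.range K, ∑ l ∈ Finset.range K, a k l =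
      ∑ n ∈ Finset.range K, ∑ p ∈ Finset.HasAntidiagonal.antidiagonal n, a p.1 p.2 := by
  rw [← Finset.sum_product', Finset.sum_sigma']
  symm
  apply Finset.sum_of_injOn (fun x : (_ : ℕ) × (ℕ × ℕ) => x.2)
  · rintro ⟨n, p⟩ hx ⟨n', p'⟩ hx' hh
    simp only [Finset.coe_sigma, Set.mem_sigma_iff, Finset.mem_coe, Finset.HasAntidiagonal.mem_antidiagonal,
      Finset.mem_range] at hx hx' hh
    subst hh
    have : n = n' := by omega
    subst this; rfl
  · rintro ⟨n, p⟩ hx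
    simp only [Finset.coe_sigma, Set.mem_sigma_iff, Finset.mem_coe, Finset.HasAntidiagonal.mem_antidiagonal,
      Finset.mem_range, Finset.mem_product] at hx ⊢
    omega
  · rintro ⟨k, l⟩ _ hn
    apply h
    by_contra hh
    apply hn
    refine ⟨⟨k + l, (k, l)⟩, ?_, rfl⟩
    simp; omega
  · intros; rfl

lemma dp_br (G F f : Coeffs) (n : ℕ) :
    dp G n (br F f) = ∑ p ∈ Finset.HasAntidiagonal.antidiagonal n, br (dp G p.1 F) (dp G p.2 f) := by
  induction n with
  | zero => simp [dp_zero]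
  | succ n ih =>
    have h1 : ((n : ℂ) + 1) ≠ 0 := by exact_mod_cast Nat.succ_ne_zero n
    have h2 := dp_succ G n (br F f)
    rw [ih, map_sum] at h2
    have h3 : ∀ p : ℕ × ℕ, br G (br (dp G p.1 F) (dp G p.2 f)) =
        ((p.1 + 1 : ℕ) : ℂ) • br (dp G (p.1 + 1) F) (dp G p.2 f) +
        ((p.2 + 1 : ℕ) : ℂ) • br (dp G p.1 F) (dp G (p.2 + 1) f) := by
      intro p
      rw [← sub_add_cancel (br G (br (dp G p.1 F) (dp G p.2 f)))
        (br (dp G p.1 F) (br G (dp G p.2 f))), jacobi, dp_succ, dp_succ]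
      simp
    simp only [h3, Finset.sum_add_distrib] at h2
    have h4 := Finset.Nat.sum_antidiagonal_succ (n := n)
      (f := fun p : ℕ × ℕ => (p.1 : ℂ) • br (dp G p.1 F) (dp G p.2 f))
    have h5 := Finset.Nat.sum_antidiagonal_succ' (n := n)
      (f := fun p : ℕ × ℕ => (p.2 : ℂ) • br (dp G p.1 F) (dp G p.2 f))
    simp only [Nat.cast_zero, zero_smul, zero_add] at h4 h5
    rw [← h4, ← h5, ← Finset.sum_add_distrib] at h2
    have h6 : ∑ p ∈ Finset.HasAntidiagonal.antidiagonal (n + 1), ((p.1 : ℂ) • br (dp G p.1 F) (dp G p.2 f) +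
        (p.2 : ℂ) • br (dp G p.1 F) (dp G p.2 f)) =
        ((n : ℂ) + 1) • ∑ p ∈ Finset.HasAntidiagonal.antidiagonal (n + 1), br (dp G p.1 F) (dp G p.2 f) := by
      rw [Finset.smul_sum]
      apply Finset.sum_congr rfl
      intro p hp
      rw [← add_smul]
      congr 1
      rw [Finset.HasAntidiagonal.mem_antidiagonal] at hp
      exact_mod_cast hp
    rw [h6] at h2
    exact (smul_right_injective _ h1 h2).symm

lemma ex_br {G F f : Coeffs} (hG : V 3 G) (hF : V 2 F) :
    br (ex G F) (ex G f) = ex G (br F f) := by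
  ext α β
  set K := wt α + wt β + 1 with hK
  have hf := V_zero f
  set A := ∑ k ∈ Finset.range K, dp G k F with hA
  set B := ∑ k ∈ Finset.range K, dp G k f with hB
  have r1 : V (K + 2) (ex G F - A) := V_ex_sub hG hF K
  have r2 : V (K + 0) (ex G f - B) := V_ex_sub hG hf K
  have hA2 : V 2 A := by
    intro α β h
    rw [hA, Finset.sum_apply, Finset.sum_apply]
    exact Finset.sum_eq_zero fun k _ => V_dp hG hF k α β (by omega)
  have e : br (ex G F) (ex G f) = br (ex G F - A) (ex G f) + br A (ex G f - B) + br A B := by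
    simp only [map_sub, LinearMap.sub_apply]; abel
  rw [e]
  have z1 := V_br (n := K) r1 (V_zero (ex G f)) (by omega) α β (by omega)
  have z2 := V_br (n := K) hA2 r2 (by omega) α β (by omega)
  simp only [Pi.add_apply, z1, z2, zero_add]
  rw [ex_eq (K := K) hG (V_zero (br F f)) (by omega)]
  simp only [dp_br, hA, hB, map_sum, LinearMap.sum_apply, Finset.sum_apply]
  rw [Finset.sum_comm]
  apply sum_square (fun k l => br (dp G k F) (dp G l f) α β)
  intro k l hkl
  exact V_br (n := K) (V_dp hG hF k) (V_dp hG hf l) (by omega) α β (by omega)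

lemma V_neg {n : ℕ} {G : Coeffs} (h : V n G) : V n (-G) :=
  fun α β hh => by simp [h α β hh]

lemma coef_exp (n : ℕ) : ∑ p ∈ Finset.HasAntidiagonal.antidiagonal n,
    ((p.1.factorial : ℂ))⁻¹ * (((p.2.factorial : ℂ))⁻¹ * (-1) ^ p.2) = if n = 0 then 1 else 0 := by
  have := congrArg (PowerSeries.coeff n) (PowerSeries.exp_mul_exp_neg_eq_one (A := ℂ))
  rw [PowerSeries.coeff_mul, PowerSeries.coeff_one] at this
  rw [← this]
  apply Finset.sum_congr rfl
  intro p _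
  simp [PowerSeries.evalNegHom, PowerSeries.coeff_exp, PowerSeries.coeff_rescale]
  left; ring

lemma ex_ex_neg {G : Coeffs} (hG : V 3 G) (f : Coeffs) : ex G (ex (-G) f) = f := by
  ext α β
  set K := wt α + wt β + 1 with hK
  have hf := V_zero f
  set B := ∑ k ∈ Finset.range K, dp (-G) k f with hB
  have r2 : V (K + 0) (ex (-G) f - B) := V_ex_sub (V_neg hG) hf K
  rw [ex_eq (K := K) hG (V_zero _) (by omega)]
  have e : ∀ k, dp G k (ex (-G) f) α β = dp G k B α β := by
    intro k
    have e1 : dp G k (ex (-G) f) = dp G k (ex (-G) f - B) + dp G k B := by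
      simp only [dp, map_sub, smul_sub]; abel
    rw [e1, Pi.add_apply, Pi.add_apply, V_dp hG r2 k α β (by omega), zero_add]
  have e2 : ∀ k l, dp G k (dp (-G) l f) = (((k.factorial : ℂ))⁻¹ *
      (((l.factorial : ℂ))⁻¹ * (-1) ^ l)) • ((br G) ^ (k + l)) f := by
    intro k l
    have hn : br (-G) = (-1 : ℂ) • br G := by
      have h1 : -G = (-1 : ℂ) • G := by
        funext a b
        simp
      rw [h1, map_smul]
    simp only [dp, hn, smul_pow, LinearMap.smul_apply, pow_add, Module.End.mul_apply, map_smul,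
      smul_smul, mul_assoc]
  have e3 : ∀ k, dp G k B α β = ∑ l ∈ Finset.range K, (((k.factorial : ℂ))⁻¹ *
      (((l.factorial : ℂ))⁻¹ * (-1) ^ l)) * ((br G) ^ (k + l)) f α β := by
    intro k
    have : dp G k B = ∑ l ∈ Finset.range K, dp G k (dp (-G) l f) := by
      simp only [hB, dp, map_sum, Finset.smul_sum]
    rw [this]
    simp only [e2, Finset.sum_apply, Pi.smul_apply, smul_eq_mul]
  simp only [e, e3]
  rw [sum_square (fun k l => (((k.factorial : ℂ))⁻¹ *
      (((l.factorial : ℂ))⁻¹ * (-1) ^ l)) * ((br G) ^ (k + l)) f α β)]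
  · have : ∀ n, ∑ p ∈ Finset.HasAntidiagonal.antidiagonal n, (((p.1.factorial : ℂ))⁻¹ *
      (((p.2.factorial : ℂ))⁻¹ * (-1) ^ p.2)) * ((br G) ^ (p.1 + p.2)) f α β =
        if n = 0 then f α β else 0 := by
      intro n
      have h := congrArg (· * ((br G) ^ n) f α β) (coef_exp n)
      simp only [Finset.sum_mul] at h
      have h' : ((if n = 0 then 1 else 0 : ℂ) * ((br G) ^ n) f α β) =
          if n = 0 then f α β else 0 := by
        split_ifs with hn
        · subst hn; simp
        · simp
      rw [← h', ← h]
      apply Finset.sum_congr rfl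
      intro p hp
      rw [Finset.HasAntidiagonal.mem_antidiagonal.1 hp]
    simp only [this]
    simp [hK]
  · intro k l hkl
    rw [V_pow (p := 1) hG hf (k + l) α β (by omega), mul_zero]

lemma ex_neg_ex {G : Coeffs} (hG : V 3 G) (f : Coeffs) : ex (-G) (ex G f) = f := by
  have := ex_ex_neg (V_neg hG) f
  rwa [neg_neg] at this

lemma ex_smul {G : Coeffs} (hG : V 3 G) (c : ℂ) (f : Coeffs) : ex G (c • f) = c • ex G f := by
  ext α β
  simp only [Pi.smul_apply, smul_eq_mul]
  rw [ex_eq (K := wt α + wt β + 1) hG (V_zero _) (by omega),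
    ex_eq (K := wt α + wt β + 1) hG (V_zero _) (by omega), Finset.mul_sum]
  apply Finset.sum_congr rfl
  intro k _
  simp only [dp, map_smul, Pi.smul_apply, smul_eq_mul]
  ring

lemma V_ex_two {S H : Coeffs} {p : ℕ} (hp : 1 ≤ p) (hS : V (p + 2) S) (hH : V 2 H) :
    V (2 * p + 2) (ex S H - H - br S H) := by
  intro α β h
  have hS3 : V 3 S := hS.mono (by omega)
  simp only [Pi.sub_apply]
  rw [ex_eq (K := wt α + wt β + 2) hS3 (V_zero H) (by omega), Finset.sum_range_succ',
    Finset.sum_range_succ', Finset.sum_eq_zero]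
  · simp [dp]
  · intro k _
    simp only [dp, Pi.smul_apply, smul_eq_mul]
    rw [V_pow hS hH (k + 1 + 1) α β, mul_zero]
    have : 2 * p ≤ (k + 1 + 1) * p := Nat.mul_le_mul_right _ (by omega)
    omega

/-! ### Relation with the frozen definitions -/

lemma M0_pow (S : Coeffs) {H : Coeffs} (hH : M0 H) (k : ℕ) : M0 (((br S) ^ k) H) := by
  induction k with
  | zero => simpa using hH
  | succ k ih => rw [pow_succ', Module.End.mul_apply]; exact M0_br S ih

lemma adPow_eq (S : Coeffs) {H : Coeffs} (hH : M0 H) (k : ℕ) :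
    adPow S k H = ((br S) ^ k) H := by
  induction k with
  | zero => simp [adPow]
  | succ k ih =>
    rw [adPow, ih, bracket_eq_br S (M0_pow S hH k), pow_succ', Module.End.mul_apply]

lemma expAd_eq (S : Coeffs) {H : Coeffs} (hH : M0 H) : expAd S H = ex S H := by
  ext α β
  simp only [expAd, ex, dp, adPow_eq S hH, Pi.smul_apply, smul_eq_mul]

lemma M0_ex (S : Coeffs) {H : Coeffs} (hH : M0 H) : M0 (ex S H) := by
  intro α β hm
  simp only [ex, dp, Pi.smul_apply, smul_eq_mul, M0_pow S hH _ α β hm, mul_zero, finsum_zero]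

/-- Reality condition. -/
def RR (F : Coeffs) : Prop := ∀ α β, F α β = (starRingEnd ℂ) (F β α)

lemma supp_swap {α β : Idx} {x : ℤ × (Idx × Idx) × (Idx × Idx)} (hx : x ∈ supp α β) :
    ((x.1, x.2.1.swap, x.2.2.swap) : ℤ × (Idx × Idx) × (Idx × Idx)) ∈ supp β α := by
  obtain ⟨h1, h2, h3, h4⟩ := hx
  refine ⟨?_, h3, h2, ?_⟩
  · simp only [Prod.fst_swap, Prod.snd_swap]; rw [mom_eq] at *; linarith
  · intro h; apply h4
    simp only [cc, Prod.fst_swap, Prod.snd_swap] at *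
    linear_combination -h

lemma RR_br {F G : Coeffs} (hF : RR F) (hG : RR G) : RR (br F G) := by
  intro α β
  rw [br_apply, br_apply, map_mul, map_sum, Complex.conj_I, neg_mul, ← mul_neg,
    ← Finset.sum_neg_distrib]
  congr 1
  refine Finset.sum_nbij' (fun x => (x.1, x.2.1.swap, x.2.2.swap))
    (fun x => (x.1, x.2.1.swap, x.2.2.swap)) ?_ ?_ ?_ ?_ ?_
  · intro x hx
    rw [Set.Finite.mem_toFinset] at *
    exact supp_swap hx
  · intro x hx
    rw [Set.Finite.mem_toFinset] at *
    exact supp_swap hx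
  · intro x _; simp
  · intro x _; simp
  · intro x _
    rw [hF x.2.1.1 x.2.1.2, hG x.2.2.1 x.2.2.2]
    simp only [map_mul, cc, Prod.fst_swap, Prod.snd_swap, map_sub, Complex.conj_natCast]
    ring

lemma RR_pow {S H : Coeffs} (hS : RR S) (hH : RR H) (k : ℕ) : RR (((br S) ^ k) H) := by
  induction k with
  | zero => simpa using hH
  | succ k ih => rw [pow_succ', Module.End.mul_apply]; exact RR_br hS ih

lemma RR_ex {S H : Coeffs} (h3 : V 3 S) (hS : RR S) (hH : RR H) : RR (ex S H) := by
  intro α β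
  rw [ex_eq (K := wt α + wt β + 1) h3 (V_zero H) (by omega),
    ex_eq (K := wt α + wt β + 1) h3 (V_zero H) (by omega), map_sum]
  apply Finset.sum_congr rfl
  intro k _
  simp only [dp, Pi.smul_apply, smul_eq_mul, map_mul, map_inv₀, Complex.conj_natCast]
  rw [RR_pow hS hH k α β]

lemma br_antisymm {F G : Coeffs} (hF : M0 F) (hG : M0 G) : br F G = - br G F := by
  rw [← bracket_eq_br F hG, ← bracket_eq_br G hF]
  ext α β
  simp only [bracket, Pi.neg_apply, ← mul_neg, ← finsum_neg_distrib]
  congr 1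
  let e : (ℤ × (Idx × Idx) × (Idx × Idx)) ≃ (ℤ × (Idx × Idx) × (Idx × Idx)) :=
    Equiv.prodCongr (Equiv.refl ℤ) (Equiv.prodComm _ _)
  rw [← finsum_comp_equiv e]
  apply finsum_congr
  rintro ⟨j, a, b⟩
  simp only [bracketTerm, e, Equiv.prodCongr_apply, Prod.map, Equiv.refl_apply,
    Equiv.prodComm_apply, Prod.fst_swap, Prod.snd_swap, add_comm b.1 a.1, add_comm b.2 a.2]
  by_cases h : mom a.1 a.2 = 0 ∧ mom b.1 b.2 = 0 ∧ α = a.1 + b.1 - Finsupp.single j 1 ∧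
      β = a.2 + b.2 - Finsupp.single j 1
  · rw [if_pos ⟨h.2.1, h.1, h.2.2⟩, if_pos h]; ring
  · rw [if_neg, if_neg h, neg_zero]
    rintro ⟨h1, h2, h3⟩
    exact h ⟨h2, h1, h3⟩

lemma single_inj {j k : ℤ} (h : (Finsupp.single j 1 : Idx) = Finsupp.single k 1) : j = k :=
  Finsupp.single_left_injective one_ne_zero h

lemma Dom_self (ω : ℤ → ℝ) (j : ℤ) : Dom ω (Finsupp.single j 1) (Finsupp.single j 1) = ω j := by
  rw [Dom, finsum_eq_single _ j]
  · simp
  · intro k hk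
    rw [if_neg]
    rintro ⟨h, _⟩
    exact hk (single_inj h).symm

lemma Dom_ne {ω : ℤ → ℝ} {α β : Idx} (h : Dom ω α β ≠ 0) :
    ∃ j, α = Finsupp.single j 1 ∧ β = Finsupp.single j 1 := by
  by_contra hc
  push Not at hc
  apply h
  rw [Dom]
  apply finsum_eq_zero_of_forall_eq_zero
  intro j
  rw [if_neg]
  rintro ⟨h1, h2⟩
  exact hc j h1 h2

lemma Dom_diag {ω : ℤ → ℝ} {α β : Idx} (h : α ≠ β) : Dom ω α β = 0 := by
  by_contra hc
  obtain ⟨j, h1, h2⟩ := Dom_ne hc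
  exact h (h1.trans h2.symm)

lemma V_Dom (ω : ℤ → ℝ) : V 2 (Dom ω) := by
  intro α β h
  by_contra hc
  obtain ⟨j, h1, h2⟩ := Dom_ne hc
  rw [h1, h2, wt_single] at h
  omega

lemma Dom_V {ω : ℤ → ℝ} {α β : Idx} (h : wt α + wt β ≠ 2) : Dom ω α β = 0 := by
  by_contra hc
  obtain ⟨j, h1, h2⟩ := Dom_ne hc
  rw [h1, h2, wt_single] at h
  omega

lemma M0_Dom (ω : ℤ → ℝ) : M0 (Dom ω) := by
  intro α β h
  apply Dom_diag
  rintro rfl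
  apply h
  rw [mom_eq, sub_self]

lemma RR_Dom (ω : ℤ → ℝ) : RR (Dom ω) := by
  intro α β
  by_cases h : α = β
  · subst h
    by_cases h0 : Dom ω α α = 0
    · simp [h0]
    · obtain ⟨j, h1, _⟩ := Dom_ne h0
      rw [h1, Dom_self]; simp
  · rw [Dom_diag h, Dom_diag (Ne.symm h), map_zero]

lemma br_Dom (ω : ℤ → ℝ) (f : Coeffs) (α β : Idx) :
    br (Dom ω) f α β = Complex.I * ((∑ j ∈ α.support ∪ β.support,
      (ω j : ℂ) * ((β j : ℂ) - (α j : ℂ))) * f α β) := by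
  rw [br_finsum]
  congr 1
  have hinj : Function.Injective (fun j : ℤ => (j, eps j, (α, β))) := by
    intro x y h; simp only [Prod.mk.injEq] at h; exact h.1
  rw [finsum_eq_sum_of_support_subset (s := (α.support ∪ β.support).map ⟨_, hinj⟩)]
  · rw [Finset.sum_map, Finset.sum_mul]
    apply Finset.sum_congr rfl
    intro j _
    change brTerm (Dom ω) f α β
      (j, (Finsupp.single j 1, Finsupp.single j 1), (α, β)) = _
    rw [brTerm, if_pos]
    · simp only [Dom_self, cc, Finsupp.single_eq_same, Nat.cast_one]; ring
    · refine ⟨?_, ?_, ?_⟩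
      · rw [mom_eq, sub_self]
      · rw [add_tsub_cancel_left]
      · rw [add_tsub_cancel_left]
  · rintro ⟨j, ⟨a1, a2⟩, ⟨b1, b2⟩⟩ hx
    rw [Function.mem_support, brTerm] at hx
    split_ifs at hx with h
    · have hD : Dom ω a1 a2 ≠ 0 := fun h0 => hx (by simp [h0])
      have hc : cc j (a1, a2) (b1, b2) ≠ 0 := fun h0 => hx (by simp [h0])
      obtain ⟨k, rfl, rfl⟩ := Dom_ne hD
      have hjk : j = k := by
        by_contra hjk
        apply hc
        simp [cc, Ne.symm hjk]
      subst hjk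
      obtain ⟨_, h2, h3⟩ := h
      simp only [add_tsub_cancel_left] at h2 h3
      subst h2 h3
      simp only [Finset.coe_map, Set.mem_image, Function.Embedding.coeFn_mk]
      refine ⟨j, ?_, rfl⟩
      simp only [Finset.coe_union, Set.mem_union, Finset.mem_coe, Finsupp.mem_support_iff]
      by_contra hh
      push Not at hh
      apply hc
      simp [cc, hh.1, hh.2]
    · exact absurd rfl hx

lemma nonres {ω : ℤ → ℝ} (hω : NonResonant ω) {α β : Idx} (h : α ≠ β) :
    (∑ j ∈ α.support ∪ β.support, (ω j : ℂ) * ((β j : ℂ) - (α j : ℂ))) ≠ 0 := by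
  let ℓ : ℤ →₀ ℤ := β.mapRange (fun n : ℕ => (n : ℤ)) (by simp) -
    α.mapRange (fun n : ℕ => (n : ℤ)) (by simp)
  have hl : ∀ j, ℓ j = (β j : ℤ) - (α j : ℤ) := fun j => by simp [ℓ]
  have hne : ℓ ≠ 0 := by
    intro h0
    apply h
    ext j
    have := hl j
    rw [h0, Finsupp.zero_apply] at this
    omega
  have h1 := hω ℓ hne
  rw [Finsupp.sum_of_support_subset (s := α.support ∪ β.support)] at h1
  · intro h2
    apply h1
    have h3 : ((∑ j ∈ α.support ∪ β.support, ω j * ((ℓ j : ℤ) : ℝ) : ℝ) : ℂ) = 0 := by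
      rw [← h2]
      push_cast
      apply Finset.sum_congr rfl
      intro j _
      rw [hl]
      push_cast
      rfl
    exact_mod_cast h3
  · intro j hj
    rw [Finsupp.mem_support_iff, hl] at hj
    simp only [Finset.mem_union, Finsupp.mem_support_iff]
    omega
  · simp

/-- The basis vector `conj u_j`. -/
noncomputable def ub (j : ℤ) : Coeffs := dl (0, Finsupp.single j 1)

lemma br_ub (Z : Coeffs) (j : ℤ) (E : Idx) :
    br Z (ub j) E (E + Finsupp.single j 1) = Complex.I *
      (Z (E + Finsupp.single j 1) (E + Finsupp.single j 1) * ((E j : ℂ) + 1)) := by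
  rw [br_finsum]
  congr 1
  rw [finsum_eq_single _ (j, (E + Finsupp.single j 1, E + Finsupp.single j 1),
    (0, Finsupp.single j 1))]
  · rw [brTerm, if_pos]
    · simp [ub, dl, cc]
    · refine ⟨by rw [mom_eq, sub_self], ?_, ?_⟩
      · simp
      · simp
  · rintro ⟨k, ⟨a1, a2⟩, ⟨b1, b2⟩⟩ hx
    rw [brTerm]
    split_ifs with h
    swap
    · rfl
    by_contra hne
    apply hx
    have hu : ub j b1 b2 ≠ 0 := fun h0 => hne (by simp [h0])
    have hc : cc k (a1, a2) (b1, b2) ≠ 0 := fun h0 => hne (by simp [h0])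
    have hb : (b1, b2) = ((0, Finsupp.single j 1) : Idx × Idx) := by
      by_contra hh; apply hu; simp only [ub, dl]; rw [if_neg hh]
    obtain ⟨rfl, rfl⟩ := Prod.mk.inj hb
    have hjk : k = j := by
      by_contra hjk
      apply hc
      simp [cc, Ne.symm hjk]
    subst hjk
    obtain ⟨e1, e2⟩ := cc_eq hc h.2.1 h.2.2
    simp only [add_zero] at e1
    have e2' : E + Finsupp.single k 1 = a2 := add_right_cancel e2
    rw [← e1, ← e2']

lemma br_Dom_ub (ω : ℤ → ℝ) (j : ℤ) (f : Coeffs) (E : Idx) :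
    br (Dom ω) f E (E + Finsupp.single j 1) =
      (Complex.I * ω j) * f E (E + Finsupp.single j 1) := by
  rw [br_Dom, ← mul_assoc]
  congr 2
  rw [Finset.sum_eq_single j]
  · simp
  · intro k _ hk
    simp [Ne.symm hk]
  · intro hj
    simp at hj

/-- Eigenfunction property replacing formal linearizability. -/
def Eig (ω : ℤ → ℝ) (H : Coeffs) : Prop :=
  ∀ j, ∃ f : Coeffs, V 2 (f - ub j) ∧ br H f = (Complex.I * ω j) • f

lemma V_ub (j : ℤ) : V 1 (ub j) := by
  intro α β h
  simp only [ub, dl]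
  rw [if_neg]
  intro hh
  obtain ⟨rfl, rfl⟩ := Prod.mk.inj hh
  rw [wt_single] at h
  omega

lemma normal_form {ω : ℤ → ℝ} {d : ℕ} {Z W : Coeffs} (hZd : ∀ α β, α ≠ β → Z α β = 0)
    (hZ : V (d + 2) Z) (hW : V (2 * d + 2) W) (hE : Eig ω (Dom ω + Z + W)) :
    V (2 * d + 2) Z := by
  have main : ∀ r, r ≤ 2 * d + 2 → V r Z := by
    intro r
    induction r with
    | zero => intro _; exact V_zero Z
    | succ r ih =>
      intro hr
      have ih := ih (by omega)
      intro α β hlt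
      by_cases hab : α = β
      swap
      · exact hZd α β hab
      subst hab
      by_cases h1 : wt α + wt α < r
      · exact ih _ _ h1
      by_cases h2 : wt α + wt α < d + 2
      · exact hZ _ _ h2
      have hne : α ≠ 0 := by
        rintro rfl
        apply h2
        simp [wt]
      obtain ⟨j, hj⟩ := Finsupp.ne_iff.1 hne
      have hj : 1 ≤ α j := Nat.one_le_iff_ne_zero.2 hj
      set E := α - Finsupp.single j 1 with hEdef
      have hα : E + Finsupp.single j 1 = α := sub_single_add hj
      have hw : wt α = wt E + 1 := by rw [← hα, wt_add, wt_single]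
      obtain ⟨f, hf, hbr⟩ := hE j
      have hf1 : V 1 f := by
        have := (hf.mono (by omega : 1 ≤ 2)).add (V_ub j)
        rwa [sub_add_cancel] at this
      have e1 := congrFun (congrFun hbr E) (E + Finsupp.single j 1)
      simp only [map_add, LinearMap.add_apply, Pi.add_apply, Pi.smul_apply, smul_eq_mul,
        br_Dom_ub] at e1
      have e2 : br W f E (E + Finsupp.single j 1) = 0 :=
        V_br (n := 2 * d + 1) hW hf1 (by omega) _ _ (by rw [hα]; omega)
      have e3 : br Z (f - ub j) E (E + Finsupp.single j 1) = 0 :=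
        V_br (n := r) ih hf (by omega) _ _ (by rw [hα]; omega)
      rw [map_sub, Pi.sub_apply, Pi.sub_apply, br_ub, sub_eq_zero] at e3
      rw [e2, e3, add_zero, add_eq_left, hα] at e1
      have h3 : ((E j : ℂ) + 1) ≠ 0 := by exact_mod_cast Nat.succ_ne_zero (E j)
      simpa [h3] using e1
  exact main _ le_rfl

lemma Eig_start {ω : ℤ → ℝ} {G H : Coeffs} (hG : V 3 G) (hH : V 2 H) (h : ex G H = Dom ω) :
    Eig ω H := by
  intro j
  refine ⟨ex (-G) (ub j), ?_, ?_⟩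
  · have := V_ex_sub (V_neg hG) (V_ub j) 1
    simpa [dp_zero] using this
  · have h1 := ex_br (f := ex (-G) (ub j)) hG hH
    rw [h, ex_ex_neg hG] at h1
    have h2 : br (Dom ω) (ub j) = (Complex.I * ω j) • ub j := by
      ext α β
      by_cases hh : (α, β) = ((0, Finsupp.single j 1) : Idx × Idx)
      · obtain ⟨rfl, rfl⟩ := Prod.mk.inj hh
        have := br_Dom_ub ω j (ub j) 0
        rw [zero_add] at this
        exact this
      · rw [br_Dom]
        simp [ub, dl, hh]
    rw [← ex_neg_ex hG (br H (ex (-G) (ub j))), ← h1, h2]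
    exact ex_smul (V_neg hG) _ _

lemma Eig_step {ω : ℤ → ℝ} {S H : Coeffs} (hS : V 3 S) (hH : V 2 H) (h : Eig ω H) :
    Eig ω (ex S H) := by
  intro j
  obtain ⟨f, hf, hbr⟩ := h j
  have hf1 : V 1 f := by
    have := (hf.mono (by omega : 1 ≤ 2)).add (V_ub j)
    rwa [sub_add_cancel] at this
  refine ⟨ex S f, ?_, ?_⟩
  · have := (V_ex_sub hS hf1 1).add hf
    simpa [dp_zero] using this
  · rw [ex_br hS hH, hbr]
    exact ex_smul hS _ _
/-- quadratic convergence of the linearizing scheme: if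
`H₀ = D_ω + P₀` with `P₀ ∈ 𝓕^{≥1}` is formally linearizable and the sequence
is defined by `{D_ω, S_i} = Π^𝓡 H_i` with `S_i ∈ 𝓡` and
`H_{i+1} = e^{{S_i,·}} H_i`, then `H_i = D_ω + P_i` with `P_i ∈ 𝓕^{≥2^i}`. -/
theorem formal_linearization_doubling (ω : ℤ → ℝ) (hω : NonResonant ω)
    (P₀ : Coeffs) (hP₀ : InFge 1 P₀)
    (hlin : ∃ G : Coeffs, InFge 1 G ∧ expAd G (Dom ω + P₀) = Dom ω)
    (H S : ℕ → Coeffs) (hH0 : H 0 = Dom ω + P₀)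
    (hS : ∀ i, InR (S i) ∧ bracket (Dom ω) (S i) = PiR (H i))
    (hHrec : ∀ i, H (i + 1) = expAd (S i) (H i)) :
    ∀ i, InFge (2 ^ i) (H i - Dom ω) := by
  obtain ⟨G, hG, hGl⟩ := hlin
  have hInF : ∀ (d : ℕ) (K : Coeffs), InFge d (K - Dom ω) → M0 K ∧ RR K ∧ V 2 K := by
    intro d K hK
    have e : K = Dom ω + (K - Dom ω) := by abel
    refine ⟨?_, ?_, ?_⟩
    · intro α β hm
      rw [e, Pi.add_apply, Pi.add_apply, M0_Dom ω α β hm, hK.1.2.2.2.2 α β hm, add_zero]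
    · intro α β
      rw [e, Pi.add_apply, Pi.add_apply, Pi.add_apply, Pi.add_apply, map_add, ← RR_Dom ω α β,
        ← hK.1.2.2.2.1 α β]
    · rw [e]
      exact (V_Dom ω).add (V.mono (n := d + 2) hK.2 (by omega))
  have main : ∀ i, InFge (2 ^ i) (H i - Dom ω) ∧ Eig ω (H i) := by
    intro i
    induction i with
    | zero =>
      have h0 : InFge (2 ^ 0) (H 0 - Dom ω) := by
        rw [hH0, add_sub_cancel_left, pow_zero]; exact hP₀
      obtain ⟨hM, -, hV⟩ := hInF _ _ h0
      refine ⟨h0, ?_⟩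
      rw [← hH0, expAd_eq G hM] at hGl
      exact Eig_start hG.2 hV hGl
    | succ i ih =>
      obtain ⟨hP, hE⟩ := ih
      obtain ⟨hM, hR, hV⟩ := hInF _ _ hP
      obtain ⟨⟨hSF, hSd⟩, hSe⟩ := hS i
      have hSM : M0 (S i) := hSF.2.2.2.2
      have hSR : RR (S i) := hSF.2.2.2.1
      have hPV : V (2 ^ i + 2) (H i - Dom ω) := hP.2
      have hd : 1 ≤ 2 ^ i := Nat.one_le_two_pow
      rw [hHrec i, expAd_eq (S i) hM, pow_succ']
      rw [bracket_eq_br _ hSM] at hSe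
      generalize 2 ^ i = d at *
      have hSV : V (d + 2) (S i) := by
        intro α β hlt
        by_cases hab : α = β
        · subst hab; exact hSd α
        have h1 := congrFun (congrFun hSe α) β
        have h2 : H i α β = 0 := by
          have := hPV α β hlt
          rwa [Pi.sub_apply, Pi.sub_apply, Dom_diag hab, sub_zero] at this
        rw [br_Dom, PiR, if_neg hab, h2] at h1
        simpa [nonres hω hab, Complex.I_ne_zero] using h1
      have hS3 : V 3 (S i) := hSV.mono (by omega)
      have hE' := Eig_step hS3 hV hE
      refine ⟨?_, hE'⟩
      have hanti : br (S i) (Dom ω) = - PiR (H i) := by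
        rw [br_antisymm hSM (M0_Dom ω), hSe]
      set Z : Coeffs := H i - Dom ω - PiR (H i) with hZ
      have hZd : ∀ α β, α ≠ β → Z α β = 0 := by
        intro α β hab
        simp [hZ, PiR, hab, Dom_diag hab]
      have hZV : V (d + 2) Z := by
        intro α β hlt
        by_cases hab : α = β
        · have := hPV α β hlt
          simpa [hZ, PiR, hab] using this
        · exact hZd α β hab
      have hW : V (2 * d + 2) (ex (S i) (H i) - Dom ω - Z) := by
        have e : ex (S i) (H i) - Dom ω - Z = (ex (S i) (H i) - H i - br (S i) (H i)) +
            br (S i) (H i - Dom ω) := by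
          rw [map_sub, hanti, hZ]; abel
        rw [e]
        exact (V_ex_two hd hSV hV).add (V_br hSV hPV (by omega))
      have hZ2 : V (2 * d + 2) Z := by
        apply normal_form hZd hZV hW
        have e : Dom ω + Z + (ex (S i) (H i) - Dom ω - Z) = ex (S i) (H i) := by abel
        rw [e]; exact hE'
      have hfin : V (2 * d + 2) (ex (S i) (H i) - Dom ω) := by
        have := hW.add hZ2
        rwa [sub_add_cancel] at this
      have w0 : wt 0 = 0 := by simp [wt]
      refine ⟨⟨?_, ?_, ?_, ?_, ?_⟩, hfin⟩
      · exact hfin _ _ (by rw [w0]; omega)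
      · exact hfin _ _ (by rw [w0, wt_single]; omega)
      · exact hfin _ _ (by rw [w0, wt_single]; omega)
      · intro α β
        rw [Pi.sub_apply, Pi.sub_apply, Pi.sub_apply, Pi.sub_apply, map_sub, ← RR_Dom ω α β,
          ← RR_ex hS3 hSR hR α β]
      · intro α β hm
        rw [Pi.sub_apply, Pi.sub_apply, M0_ex _ hM α β hm, M0_Dom ω α β hm, sub_zero]
  exact fun i => (main i).1
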